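/- arXiv:2302.09623 — 2 statements merged into one kernel-verified Lean document; each statement's English description precedes it below -/
import Mathlib

section
/- Let p ∈ (1, ∞) with conjugate exponent q = p/(p−1), let F : 𝕋 → ℂ be absolutely continuous with Ḟ ∈ L^p(𝕋), and let f = P[F] be its Poisson integral. Then f is (1/q)-Hölder continuous on 𝔻, i.e., there exists L > 0 such that |f(z) − f(w)| ≤ L |z − w|^{1/q} for all z, w ∈ 𝔻. -/
open MeasureTheory Complex Metric Set Filter
open scoped Real Topology ENNReal

noncomputable section

/-- The Poisson kernel `P(z) = (1-|z|^2)/|1-z|^2`. -/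
def poissonKer (z : ℂ) : ℝ := (1 - ‖z‖ ^ 2) / ‖1 - z‖ ^ 2

/-- The Poisson integral of a boundary function `F` defined on the unit circle. -/
def poissonInt (F : ℂ → ℂ) (z : ℂ) : ℂ :=
  (1 / (2 * π)) * ∫ t in (0:ℝ)..(2 * π),
    (poissonKer (z * Complex.exp (-(t : ℂ) * Complex.I)) : ℂ) *
      F (Complex.exp ((t : ℂ) * Complex.I))

/-- The Poisson integral of a (2π-periodic) function of the angular variable. -/
def poissonIntR (φ : ℝ → ℂ) (z : ℂ) : ℂ :=
  (1 / (2 * π)) * ∫ t in (0:ℝ)..(2 * π),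
    (poissonKer (z * Complex.exp (-(t : ℂ) * Complex.I)) : ℂ) * φ t

/-- The conjugate Poisson kernel `P̃(z) = Im((1+z)/(1-z))`. -/
def conjPoissonKer (z : ℂ) : ℝ := ((1 + z) / (1 - z)).im

/-- The conjugate Poisson integral of a function of the angular variable. -/
def conjPoissonIntR (φ : ℝ → ℂ) (z : ℂ) : ℂ :=
  (1 / (2 * π)) * ∫ t in (0:ℝ)..(2 * π),
    (conjPoissonKer (z * Complex.exp (-(t : ℂ) * Complex.I)) : ℂ) * φ t

/-- Wirtinger derivative `f_z = (1/2)(∂ₓ - i ∂_y) f`. -/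
def wdz (f : ℂ → ℂ) (z : ℂ) : ℂ :=
  (1 / 2) * (fderiv ℝ f z 1 - Complex.I * fderiv ℝ f z Complex.I)

/-- Wirtinger derivative `f_z̄ = (1/2)(∂ₓ + i ∂_y) f`. -/
def wdzb (f : ℂ → ℂ) (z : ℂ) : ℂ :=
  (1 / 2) * (fderiv ℝ f z 1 + Complex.I * fderiv ℝ f z Complex.I)

/-- The angular derivative `f_θ(z) = i (z f_z(z) - z̄ f_z̄(z))`. -/
def fTheta (f : ℂ → ℂ) (z : ℂ) : ℂ :=
  Complex.I * (z * wdz f z - (starRingEnd ℂ) z * wdzb f z)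

/-- The radial derivative multiplied by `r`: `r f_r(z) = z f_z(z) + z̄ f_z̄(z)`. -/
def rFr (f : ℂ → ℂ) (z : ℂ) : ℂ :=
  z * wdz f z + (starRingEnd ℂ) z * wdzb f z

/-- `F : 𝕋 → ℂ` is absolutely continuous with angular derivative `Ḟ = Fd`,
i.e. `t ↦ F(e^{it})` is an indefinite integral of the (locally integrable,
2π-periodic) function `Fd`. -/
def IsACDeriv (F : ℂ → ℂ) (Fd : ℝ → ℂ) : Prop :=
  (∀ a b : ℝ, IntervalIntegrable Fd MeasureTheory.volume a b) ∧
  Function.Periodic Fd (2 * π) ∧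
  ∀ t : ℝ, F (Complex.exp ((t : ℂ) * Complex.I)) = F 1 + ∫ s in (0:ℝ)..t, Fd s

/-- membership in `L^p(𝕋)`, identifying `𝕋` with `[0, 2π)`. -/
def MemLpT (p : ℝ≥0∞) (φ : ℝ → ℂ) : Prop :=
  MeasureTheory.MemLp φ p (MeasureTheory.volume.restrict (Ioc (0:ℝ) (2 * π)))

/-- The integral mean `M_p(r, g)`. -/
def Mp (p : ℝ) (g : ℂ → ℂ) (r : ℝ) : ℝ :=
  ((1 / (2 * π)) * ∫ θ in (0:ℝ)..(2 * π),
      ‖g ((r : ℂ) * Complex.exp ((θ : ℂ) * Complex.I))‖ ^ p) ^ (1 / p)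

/-- The `L^p(𝕋)` norm `((1/2π) ∫ |φ|^p)^{1/p}`. -/
def lpNormT (p : ℝ) (φ : ℝ → ℂ) : ℝ :=
  ((1 / (2 * π)) * ∫ t in (0:ℝ)..(2 * π), ‖φ t‖ ^ p) ^ (1 / p)

/-- Membership in the analytic Hardy space `H^p(𝔻)` for `p ∈ [1, ∞)`. -/
def MemHp (p : ℝ) (g : ℂ → ℂ) : Prop :=
  DifferentiableOn ℂ g (ball (0:ℂ) 1) ∧ ∃ M : ℝ, ∀ r ∈ Ioo (0:ℝ) 1, Mp p g r ≤ M

/-- Membership in `H^∞(𝔻)`: bounded analytic functions on the unit disk. -/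
def MemHinf (g : ℂ → ℂ) : Prop :=
  DifferentiableOn ℂ g (ball (0:ℂ) 1) ∧ ∃ M : ℝ, ∀ z ∈ ball (0:ℂ) 1, ‖g z‖ ≤ M

/-- Harmonicity on the unit disk: `f` is C² with vanishing Laplacian. -/
def HarmonicOnD (f : ℂ → ℂ) : Prop :=
  ContDiffOn ℝ 2 f (ball (0:ℂ) 1) ∧
  ∀ z ∈ ball (0:ℂ) 1,
    fderiv ℝ (fun w => fderiv ℝ f w 1) z 1
      + fderiv ℝ (fun w => fderiv ℝ f w Complex.I) z Complex.I = 0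

/-- Membership in the harmonic Hardy space `h^p(𝔻)` for `p ∈ [1, ∞)`. -/
def Memhp (p : ℝ) (g : ℂ → ℂ) : Prop :=
  HarmonicOnD g ∧ ∃ M : ℝ, ∀ r ∈ Ioo (0:ℝ) 1, Mp p g r ≤ M

/-- Membership in `h^∞(𝔻)`: bounded harmonic functions on the unit disk. -/
def Memhinf (g : ℂ → ℂ) : Prop :=
  HarmonicOnD g ∧ ∃ M : ℝ, ∀ z ∈ ball (0:ℂ) 1, ‖g z‖ ≤ M

/-- `L` is the value of the principal-value Hilbert transform
`(1/2π) p.v. ∫ φ(t)/tan((θ-t)/2) dt` of (the 2π-periodic) `φ` at `θ`. -/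
def IsPVHilbert (φ : ℝ → ℂ) (θ : ℝ) (L : ℂ) : Prop :=
  Filter.Tendsto
    (fun ε : ℝ => (1 / (2 * π)) *
      ∫ t in Ioo (θ - π) (θ + π) \ Ioo (θ - ε) (θ + ε),
        φ t / (Real.tan ((θ - t) / 2) : ℂ))
    (nhdsWithin 0 (Ioi 0)) (nhds L)

lemma pk_eq (z : ℂ) (t : ℝ) :
    poissonKer (z * Complex.exp (-(t : ℂ) * Complex.I))
      = poissonKernel 0 z (Complex.exp ((t : ℂ) * Complex.I)) := by
  have h1 : ‖Complex.exp (-(t : ℂ) * Complex.I)‖ = 1 := by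
    have := Complex.norm_exp_ofReal_mul_I (-t); simpa using this
  have h2 : ‖1 - z * Complex.exp (-(t : ℂ) * Complex.I)‖ =
      ‖Complex.exp ((t : ℂ) * Complex.I) - z‖ := by
    have : Complex.exp ((t : ℂ) * Complex.I) - z = Complex.exp ((t : ℂ) * Complex.I) *
        (1 - z * Complex.exp (-(t : ℂ) * Complex.I)) := by
      have : Complex.exp ((t : ℂ) * Complex.I) * Complex.exp (-(t : ℂ) * Complex.I) = 1 := by
        rw [← Complex.exp_add]; simp
      linear_combination z * this
    rw [this, norm_mul, Complex.norm_exp_ofReal_mul_I, one_mul]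
  rw [poissonKer, poissonKernel_def, h2, norm_mul, h1]
  simp [Complex.norm_exp_ofReal_mul_I]

lemma norm_E_sub_ge (z : ℂ) (t : ℝ) :
    1 - ‖z‖ ≤ ‖Complex.exp ((t : ℂ) * Complex.I) - z‖ := by
  have := norm_sub_norm_le (Complex.exp ((t : ℂ) * Complex.I)) z
  rwa [Complex.norm_exp_ofReal_mul_I] at this

lemma pk_cont {z : ℂ} (hz : ‖z‖ < 1) :
    Continuous fun t : ℝ => poissonKernel 0 z (Complex.exp ((t : ℂ) * Complex.I)) := by
  unfold poissonKernel
  refine Continuous.div (by fun_prop) (by fun_prop) ?_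
  intro t
  have := norm_E_sub_ge z t
  simp only [sub_zero]
  have : 0 < ‖Complex.exp ((t : ℂ) * Complex.I) - z‖ := by linarith
  positivity

lemma pk_nonneg {z : ℂ} (hz : ‖z‖ < 1) (t : ℝ) :
    0 ≤ poissonKernel 0 z (Complex.exp ((t : ℂ) * Complex.I)) := by
  unfold poissonKernel
  simp only [sub_zero, Complex.norm_exp_ofReal_mul_I]
  have := norm_nonneg z
  apply div_nonneg _ (by positivity)
  nlinarith

lemma pk_int {z : ℂ} (hz : ‖z‖ < 1) :
    ∫ t in (0:ℝ)..(2*π), poissonKernel 0 z (Complex.exp ((t : ℂ) * Complex.I)) = 2 * π := by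
  have hd : DiffContOnCl ℂ (fun _ : ℂ => (1:ℂ)) (ball 0 1) := diffContOnCl_const
  have h := hd.circleAverage_poissonKernel_smul (w := z) (by simpa using hz)
  rw [Real.circleAverage_def] at h
  have h2 : ∀ t : ℝ, (poissonKernel 0 z • fun _ : ℂ => (1:ℂ)) (circleMap 0 1 t) =
      ((poissonKernel 0 z (Complex.exp ((t : ℂ) * Complex.I)) : ℝ) : ℂ) := by
    intro t; simp [circleMap]
  simp_rw [h2] at h
  rw [intervalIntegral.integral_ofReal, Complex.real_smul, ← Complex.ofReal_mul] at h
  have h3 := Complex.ofReal_injective (h.trans Complex.ofReal_one.symm)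
  field_simp at h3
  linarith

lemma pk_diff {z w : ℂ} (hz : ‖z‖ < 1) (hw : ‖w‖ < 1) (t : ℝ) :
    |poissonKernel 0 z (Complex.exp ((t : ℂ) * Complex.I))
      - poissonKernel 0 w (Complex.exp ((t : ℂ) * Complex.I))| ≤
    2 * ‖z - w‖ / (‖Complex.exp ((t : ℂ) * Complex.I) - z‖ *
      ‖Complex.exp ((t : ℂ) * Complex.I) - w‖) := by
  have h1 := norm_E_sub_ge z t
  have h2 := norm_E_sub_ge w t
  have hE := Complex.norm_exp_ofReal_mul_I t
  set e := Complex.exp ((t : ℂ) * Complex.I)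
  have h1 : e - z ≠ 0 := norm_pos_iff.1 (by linarith)
  have h2 : e - w ≠ 0 := norm_pos_iff.1 (by linarith)
  simp only [poissonKernel_eq_re_herglotzRieszKernel, Function.comp, herglotzRieszKernel_def,
    sub_zero, ← Complex.sub_re]
  refine (Complex.abs_re_le_norm _).trans (le_of_eq ?_)
  have : (e + z) / (e - z) - (e + w) / (e - w) = 2 * e * (z - w) / ((e - z) * (e - w)) := by
    field_simp; ring
  rw [this]; simp [hE]

lemma chord_ge {s : ℝ} (hs : |s| ≤ π) (a : ℝ) :
    2 / π * |s| ≤ ‖Complex.exp (((a + s : ℝ) : ℂ) * Complex.I) - Complex.exp ((a : ℂ) * Complex.I)‖ := by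
  have : Complex.exp (((a + s : ℝ) : ℂ) * Complex.I) - Complex.exp ((a : ℂ) * Complex.I) =
      Complex.exp ((a : ℂ) * Complex.I) * (Complex.exp (Complex.I * s) - 1) := by
    rw [mul_sub, ← Complex.exp_add]; push_cast; ring_nf
  rw [this, norm_mul, Complex.norm_exp_ofReal_mul_I, Complex.norm_exp_I_mul_ofReal_sub_one]
  have h := Real.mul_abs_le_abs_sin (x := s/2) (by rw [abs_div]; simp; linarith)
  rw [abs_div] at h
  simp at h ⊢
  have e : 2 / π * |s| = 2 * (|s| / π) := by ring
  linarith

lemma dist_ge {z : ℂ} (hz : ‖z‖ < 1) {s : ℝ} (hs : |s| ≤ π) :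
    |s| / π ≤ ‖Complex.exp (((z.arg + s : ℝ) : ℂ) * Complex.I) - z‖ := by
  have h1 := chord_ge hs z.arg
  have h2 := norm_E_sub_ge z (z.arg + s)
  have h3 : ‖z - Complex.exp ((z.arg : ℂ) * Complex.I)‖ = 1 - ‖z‖ := by
    have : z - Complex.exp ((z.arg : ℂ) * Complex.I) =
        ((‖z‖ - 1 : ℝ) : ℂ) * Complex.exp ((z.arg : ℂ) * Complex.I) := by
      have := Complex.norm_mul_exp_arg_mul_I z
      push_cast
      linear_combination -this
    rw [this, norm_mul, Complex.norm_exp_ofReal_mul_I, Complex.norm_real, Real.norm_eq_abs,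
      abs_of_neg (by linarith)]; ring
  have h4 := norm_sub_le_norm_sub_add_norm_sub (Complex.exp (((z.arg + s : ℝ) : ℂ) * Complex.I)) z
    (Complex.exp ((z.arg : ℂ) * Complex.I))
  have : 2 / π * |s| = 2 * (|s| / π) := by ring
  linarith

lemma tail_int {α δ : ℝ} (hα : α < 1) (hδ : 0 < δ) :
    ∫ s in (-π)..π, (|s| + δ) ^ (α - 2) ≤ 2 * (δ ^ (α - 1) / (1 - α)) := by
  have hc : Continuous fun s : ℝ => (|s| + δ) ^ (α - 2) := by
    refine Continuous.rpow_const (by fun_prop) ?_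
    intro x; left; positivity
  have h1 : ∫ s in (0:ℝ)..π, (|s| + δ) ^ (α - 2) ≤ δ ^ (α - 1) / (1 - α) := by
    have : ∫ s in (0:ℝ)..π, (|s| + δ) ^ (α - 2) = ∫ s in (0:ℝ)..π, (s + δ) ^ (α - 2) := by
      apply intervalIntegral.integral_congr
      intro s hs
      rw [uIcc_of_le Real.pi_pos.le] at hs
      simp only [abs_of_nonneg hs.1]
    rw [this, intervalIntegral.integral_comp_add_right (fun x => x ^ (α - 2)), integral_rpow]
    · have e : α - 2 + 1 = -(1 - α) := by ring
      rw [e, zero_add, show α - 1 = -(1 - α) by ring, div_neg, ← neg_div]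
      have : 0 ≤ (π + δ) ^ (-(1 - α)) := by positivity
      have : 0 < 1 - α := by linarith
      gcongr
      linarith
    · right
      refine ⟨by linarith, ?_⟩
      rw [uIcc_of_le (by linarith [Real.pi_pos])]
      intro h; linarith [h.1]
  have h2 : ∫ s in (-π)..0, (|s| + δ) ^ (α - 2) = ∫ s in (0:ℝ)..π, (|s| + δ) ^ (α - 2) := by
    have := intervalIntegral.integral_comp_neg (a := 0) (b := π) (fun s : ℝ => (|s| + δ) ^ (α - 2))
    simp only [abs_neg, neg_zero] at this
    exact this.symm
  rw [← intervalIntegral.integral_add_adjacent_intervals (hc.intervalIntegrable _ 0)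
    (hc.intervalIntegrable 0 _), h2]
  linarith

lemma holder_bdry {p q : ℝ} (hpq : p.HolderConjugate q) {Fd : ℝ → ℂ}
    (h1 : ∀ a b : ℝ, IntervalIntegrable Fd volume a b) (h2 : Function.Periodic Fd (2 * π))
    (hLp : MemLpT (ENNReal.ofReal p) Fd) :
    ∃ M : ℝ, 0 ≤ M ∧ ∀ a s : ℝ, |s| ≤ π → ‖∫ x in a..(a + s), Fd x‖ ≤ M * |s| ^ (1 / q) := by
  have hp := hpq.pos
  have hp0 : ENNReal.ofReal p ≠ 0 := by simpa using hp
  have hper : Function.Periodic (fun x => ‖Fd x‖ ^ p) (2 * π) := fun x => by simp only [h2 x]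
  have hi0 : IntervalIntegrable (fun x => ‖Fd x‖ ^ p) volume 0 (2 * π) := by
    rw [intervalIntegrable_iff_integrableOn_Ioc_of_le Real.two_pi_pos.le]
    have := hLp.integrable_norm_rpow hp0 ENNReal.ofReal_ne_top
    rwa [ENNReal.toReal_ofReal hp.le] at this
  have hi := hper.intervalIntegrable₀ Real.two_pi_pos.ne' hi0
  refine ⟨(∫ x in (0:ℝ)..(2 * π), ‖Fd x‖ ^ p) ^ (1 / p), ?_, ?_⟩
  · apply Real.rpow_nonneg
    exact intervalIntegral.integral_nonneg Real.two_pi_pos.le (fun _ _ => by positivity)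
  have key : ∀ a s : ℝ, 0 ≤ s → s ≤ 2 * π → ‖∫ x in a..(a + s), Fd x‖ ≤
      (∫ x in (0:ℝ)..(2 * π), ‖Fd x‖ ^ p) ^ (1 / p) * s ^ (1 / q) := by
    intro a s hs0 hs
    have hle : a ≤ a + s := by linarith
    refine (intervalIntegral.norm_integral_le_integral_norm hle).trans ?_
    rw [intervalIntegral.integral_of_le hle]
    have hm : MemLp Fd (ENNReal.ofReal p) (volume.restrict (Ioc a (a + s))) := by
      rw [← integrable_norm_rpow_iff (h1 a (a+s)).1.aestronglyMeasurable hp0 ENNReal.ofReal_ne_top,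
        ENNReal.toReal_ofReal hp.le]
      exact (hi a (a + s)).1
    have hh := integral_mul_norm_le_Lp_mul_Lq hpq hm (g := fun _ => (1:ℂ)) (memLp_const 1)
    simp only [norm_one, mul_one, Real.one_rpow] at hh
    refine hh.trans ?_
    have e : ∫ x in Ioc a (a + s), (1:ℝ) = s := by simp [hs0]
    rw [e]
    gcongr
    rw [← intervalIntegral.integral_of_le hle]
    have e2 := hper.intervalIntegral_add_eq 0 a
    rw [zero_add] at e2
    rw [e2]
    apply intervalIntegral.integral_mono_interval le_rfl hle (by linarith) _ (hi _ _)
    exact Eventually.of_forall fun _ => by positivity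
  intro a s hs
  have hb := Real.pi_pos
  rcases le_total 0 s with h | h
  · rw [abs_of_nonneg h] at hs ⊢
    exact key a s h (by linarith)
  · rw [abs_of_nonpos h] at hs ⊢
    rw [intervalIntegral.integral_symm, norm_neg]
    have := key (a + s) (-s) (by linarith) (by linarith)
    simpa using this

lemma pointwise {α M : ℝ} (hα : 0 < α) (hα1 : α < 1) (hM : 0 ≤ M) {z w : ℂ} (hz : ‖z‖ < 1)
    (hw : ‖w‖ < 1) (hzw : 0 < ‖z - w‖) {s : ℝ} (hs : |s| ≤ π) {g : ℂ} (hg : ‖g‖ ≤ M * |s| ^ α) :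
    ‖((poissonKernel 0 z (Complex.exp (((z.arg + s : ℝ) : ℂ) * Complex.I))
      - poissonKernel 0 w (Complex.exp (((z.arg + s : ℝ) : ℂ) * Complex.I)) : ℝ) : ℂ) * g‖ ≤
    M * (2 * π * ‖z - w‖) ^ α *
      (poissonKernel 0 z (Complex.exp (((z.arg + s : ℝ) : ℂ) * Complex.I))
      + poissonKernel 0 w (Complex.exp (((z.arg + s : ℝ) : ℂ) * Complex.I)))
    + 16 * π ^ 2 * M * ‖z - w‖ * (|s| + ‖z - w‖) ^ (α - 2) := by
  have hp := Real.pi_pos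
  have nz := pk_nonneg hz (z.arg + s)
  have nw := pk_nonneg hw (z.arg + s)
  have hd := pk_diff hz hw (z.arg + s)
  have h1 := dist_ge hz hs
  rw [norm_mul, Complex.norm_real, Real.norm_eq_abs]
  set e := Complex.exp (((z.arg + s : ℝ) : ℂ) * Complex.I)
  set δ := ‖z - w‖ with hδ
  rcases le_or_gt |s| (2 * π * δ) with h | h
  · have a1 : |poissonKernel 0 z e - poissonKernel 0 w e| ≤
        poissonKernel 0 z e + poissonKernel 0 w e := abs_le.2 ⟨by linarith, by linarith⟩
    have a2 : ‖g‖ ≤ M * (2 * π * δ) ^ α := hg.trans (by gcongr)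
    have a3 : 0 ≤ 16 * π ^ 2 * M * δ * (|s| + δ) ^ (α - 2) := by positivity
    have a4 := mul_le_mul a1 a2 (norm_nonneg _) (by linarith)
    linarith
  · have hs0 : 0 < |s| := lt_trans (by positivity) h
    have h2 : |s| / (2 * π) ≤ ‖e - w‖ := by
      have t := norm_sub_le_norm_sub_add_norm_sub e w z
      rw [norm_sub_rev w z] at t
      have : δ ≤ |s| / (2 * π) := by rw [le_div_iff₀ (by positivity)]; linarith
      have e1 : |s| / π = |s| / (2 * π) + |s| / (2 * π) := by field_simp; ring
      linarith
    have a1 : |poissonKernel 0 z e - poissonKernel 0 w e| ≤ 4 * π ^ 2 * δ / |s| ^ 2 := by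
      refine hd.trans ?_
      calc _ ≤ 2 * δ / ((|s| / π) * (|s| / (2 * π))) := by gcongr
        _ = _ := by field_simp; ring
    have a2 : |s| ^ α / |s| ^ 2 = |s| ^ (α - 2) := by
      rw [Real.rpow_sub hs0]; norm_num
    have hsd : δ ≤ |s| := by nlinarith [Real.pi_gt_three]
    have a3 : |s| ^ (α - 2) ≤ 4 * (|s| + δ) ^ (α - 2) := by
      calc |s| ^ (α - 2) ≤ ((|s| + δ) / 2) ^ (α - 2) :=
            Real.rpow_le_rpow_of_nonpos (by positivity) (by linarith) (by linarith)
        _ = (1 / 2) ^ (α - 2) * (|s| + δ) ^ (α - 2) := by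
            rw [← Real.mul_rpow (by norm_num) (by positivity)]; ring_nf
        _ ≤ 4 * (|s| + δ) ^ (α - 2) := by
            gcongr
            calc ((1:ℝ) / 2) ^ (α - 2) ≤ (1 / 2) ^ (-2 : ℝ) :=
                  Real.rpow_le_rpow_of_exponent_ge (by norm_num) (by norm_num) (by linarith)
              _ = 4 := by rw [Real.rpow_neg (by norm_num)]; norm_num
    have a4 : 0 ≤ M * (2 * π * δ) ^ α * (poissonKernel 0 z e + poissonKernel 0 w e) := by positivity
    calc _ ≤ 4 * π ^ 2 * δ / |s| ^ 2 * (M * |s| ^ α) := by gcongr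
      _ = 4 * π ^ 2 * δ * M * (|s| ^ α / |s| ^ 2) := by ring
      _ ≤ 4 * π ^ 2 * δ * M * (4 * (|s| + δ) ^ (α - 2)) := by rw [a2]; gcongr
      _ ≤ _ := by linarith

lemma main_bound {α M : ℝ} (hα : 0 < α) (hα1 : α < 1) (hM : 0 ≤ M) {F : ℂ → ℂ}
    (hc : Continuous fun t : ℝ => F (Complex.exp ((t : ℂ) * Complex.I)))
    (hH : ∀ a s : ℝ, |s| ≤ π → ‖F (Complex.exp (((a + s : ℝ) : ℂ) * Complex.I))
      - F (Complex.exp ((a : ℂ) * Complex.I))‖ ≤ M * |s| ^ α) {z w : ℂ} (hz : ‖z‖ < 1)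
    (hw : ‖w‖ < 1) (hzw : 0 < ‖z - w‖) :
    ‖poissonInt F z - poissonInt F w‖ ≤
      (M * (2 * π) ^ α * (4 * π) + 32 * π ^ 2 * M / (1 - α)) * ‖z - w‖ ^ α := by
  have hp := Real.pi_pos
  let e : ℝ → ℂ := fun t => Complex.exp ((t : ℂ) * Complex.I)
  have cz : Continuous fun t : ℝ => poissonKernel 0 z (e t) := pk_cont hz
  have cw : Continuous fun t : ℝ => poissonKernel 0 w (e t) := pk_cont hw
  have hc' : Continuous fun t : ℝ => F (e t) := hc
  have iz : ∫ t in (0:ℝ)..(2*π), poissonKernel 0 z (e t) = 2 * π := pk_int hz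
  have iw : ∫ t in (0:ℝ)..(2*π), poissonKernel 0 w (e t) = 2 * π := pk_int hw
  have eper : Function.Periodic e (2 * π) := by
    intro t; simp only [e]; push_cast; rw [add_mul]; exact Complex.exp_periodic _
  have shift : ∀ {V : Type} [NormedAddCommGroup V] [NormedSpace ℝ V] (k : ℂ → V),
      ∫ t in (0:ℝ)..(2*π), k (e t) = ∫ s in (-π)..π, k (e (z.arg + s)) := by
    intro V _ _ k
    have h1 : Function.Periodic (fun t => k (e t)) (2 * π) := fun t => by simp only [eper t]
    have h2 := h1.intervalIntegral_add_eq 0 (z.arg + -π)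
    rw [zero_add, show z.arg + -π + 2 * π = z.arg + π by ring] at h2
    rw [h2, intervalIntegral.integral_comp_add_left (fun t => k (e t))]
  let G : ℂ → ℂ := fun u => ((poissonKernel 0 z u - poissonKernel 0 w u : ℝ) : ℂ) * (F u - F (e z.arg))
  have rep : poissonInt F z - poissonInt F w = (1 / (2 * π)) * ∫ t in (0:ℝ)..(2*π), G (e t) := by
    unfold poissonInt
    simp_rw [pk_eq]
    rw [← mul_sub]
    congr 1
    have cz' : Continuous fun t : ℝ => (poissonKernel 0 z (e t) : ℂ) := by fun_prop
    have cw' : Continuous fun t : ℝ => (poissonKernel 0 w (e t) : ℂ) := by fun_prop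
    have : ∫ t in (0:ℝ)..(2*π), G (e t) = ∫ t in (0:ℝ)..(2*π),
       (((poissonKernel 0 z (e t) : ℂ) * F (e t) - (poissonKernel 0 w (e t) : ℂ) * F (e t))
        - ((poissonKernel 0 z (e t) - poissonKernel 0 w (e t) : ℝ) : ℂ) * F (e z.arg)) := by
      congr 1; ext t; simp only [G]; push_cast; ring
    rw [this, intervalIntegral.integral_sub, intervalIntegral.integral_sub,
      intervalIntegral.integral_mul_const, intervalIntegral.integral_ofReal,
      intervalIntegral.integral_sub, iz, iw]
    · simp [e]
    all_goals apply Continuous.intervalIntegrable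
    all_goals first
      | exact (cz'.mul hc').sub (cw'.mul hc')
      | exact cz'.mul hc'
      | exact cw'.mul hc'
      | fun_prop
  have hct : Continuous fun s : ℝ => (|s| + ‖z - w‖) ^ (α - 2) := by
    refine Continuous.rpow_const (by fun_prop) ?_
    intro x; left; positivity
  have cz2 : Continuous fun s : ℝ => poissonKernel 0 z (e (z.arg + s)) :=
      cz.comp (by fun_prop : Continuous fun s : ℝ => z.arg + s)
  have cw2 : Continuous fun s : ℝ => poissonKernel 0 w (e (z.arg + s)) :=
      cw.comp (by fun_prop : Continuous fun s : ℝ => z.arg + s)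
  have b1 : ‖∫ s in (-π)..π, G (e (z.arg + s))‖ ≤ ∫ s in (-π)..π,
      (M * (2 * π * ‖z - w‖) ^ α *
      (poissonKernel 0 z (e (z.arg + s)) + poissonKernel 0 w (e (z.arg + s)))
      + 16 * π ^ 2 * M * ‖z - w‖ * (|s| + ‖z - w‖) ^ (α - 2)) := by
    refine intervalIntegral.norm_integral_le_of_norm_le (by linarith) ?_ ?_
    · refine Eventually.of_forall fun s hs => ?_
      have hs' : |s| ≤ π := abs_le.2 ⟨hs.1.le, hs.2⟩
      exact pointwise hα hα1 hM hz hw hzw hs' (hH z.arg s hs')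
    · apply Continuous.intervalIntegrable; fun_prop
  have b2 : ∫ s in (-π)..π,
      (M * (2 * π * ‖z - w‖) ^ α *
      (poissonKernel 0 z (e (z.arg + s)) + poissonKernel 0 w (e (z.arg + s)))
      + 16 * π ^ 2 * M * ‖z - w‖ * (|s| + ‖z - w‖) ^ (α - 2))
      ≤ M * (2 * π * ‖z - w‖) ^ α * (4 * π) +
        16 * π ^ 2 * M * ‖z - w‖ * (2 * (‖z - w‖ ^ (α - 1) / (1 - α))) := by
    rw [intervalIntegral.integral_add, intervalIntegral.integral_const_mul,
      intervalIntegral.integral_const_mul, intervalIntegral.integral_add,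
      ← shift (fun u => poissonKernel 0 z u), ← shift (fun u => poissonKernel 0 w u), iz, iw,
      show 2 * π + 2 * π = 4 * π by ring]
    · have := tail_int hα1 hzw
      gcongr
    all_goals apply Continuous.intervalIntegrable; fun_prop
  have b3 : M * (2 * π * ‖z - w‖) ^ α * (4 * π) +
        16 * π ^ 2 * M * ‖z - w‖ * (2 * (‖z - w‖ ^ (α - 1) / (1 - α))) =
      (M * (2 * π) ^ α * (4 * π) + 32 * π ^ 2 * M / (1 - α)) * ‖z - w‖ ^ α := by
    rw [Real.mul_rpow (by positivity) hzw.le, Real.rpow_sub_one hzw.ne']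
    field_simp
    ring
  rw [rep, shift G, norm_mul]
  have n1 : ‖(1 / (2 * π) : ℂ)‖ ≤ 1 := by
    have : (1 / (2 * π) : ℂ) = ((1 / (2 * π) : ℝ) : ℂ) := by push_cast; rfl
    rw [this, Complex.norm_real, Real.norm_eq_abs, abs_of_pos (by positivity),
      div_le_one (by positivity)]
    linarith [Real.pi_gt_three]
  rw [← b3]
  calc _ ≤ 1 * ‖∫ s in (-π)..π, G (e (z.arg + s))‖ := by gcongr
    _ ≤ _ := by rw [one_mul]; exact b1.trans b2

/-- For `p ∈ (1,∞)` with conjugate exponent `q = p/(p-1)`, `F : 𝕋 → ℂ`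
absolutely continuous with `Ḟ ∈ L^p(𝕋)` and `f = P[F]`, the function `f` is
`(1/q)`-Hölder continuous on `𝔻`. -/
theorem stmt18 (p q : ℝ) (hp : 1 < p) (hq : q = p / (p - 1)) (F : ℂ → ℂ) (Fd : ℝ → ℂ)
    (hF : IsACDeriv F Fd) (hLp : MemLpT (ENNReal.ofReal p) Fd) :
    ∃ L : ℝ, 0 < L ∧ ∀ z ∈ ball (0:ℂ) 1, ∀ w ∈ ball (0:ℂ) 1,
      ‖poissonInt F z - poissonInt F w‖ ≤ L * ‖z - w‖ ^ (1 / q) := by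
  obtain ⟨h1, h2, h3⟩ := hF
  have hpq : p.HolderConjugate q := by
    rw [hq]; exact Real.HolderConjugate.conjExponent hp
  obtain ⟨M, hM, hMb⟩ := holder_bdry hpq h1 h2 hLp
  have hq0 : 0 < q := hpq.symm.pos
  have hq1 : 1 < q := hpq.symm.lt
  have hα : 0 < 1 / q := by positivity
  have hα1 : 1 / q < 1 := by rw [div_lt_one hq0]; exact hq1
  have hp' := Real.pi_pos
  have hc : Continuous fun t : ℝ => F (Complex.exp ((t : ℂ) * Complex.I)) := by
    simp_rw [h3]
    exact continuous_const.add (intervalIntegral.continuous_primitive h1 0)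
  have hH : ∀ a s : ℝ, |s| ≤ π → ‖F (Complex.exp (((a + s : ℝ) : ℂ) * Complex.I))
      - F (Complex.exp ((a : ℂ) * Complex.I))‖ ≤ M * |s| ^ (1 / q) := by
    intro a s hs
    rw [h3, h3, add_sub_add_left_eq_sub,
      intervalIntegral.integral_interval_sub_left (h1 _ _) (h1 _ _)]
    exact hMb a s hs
  have h0 : 0 ≤ M * (2 * π) ^ (1 / q) * (4 * π) + 32 * π ^ 2 * M / (1 - 1 / q) := by
    have : 0 < 1 - 1 / q := by linarith
    positivity
  refine ⟨(M * (2 * π) ^ (1 / q) * (4 * π) + 32 * π ^ 2 * M / (1 - 1 / q)) + 1, by linarith, ?_⟩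
  intro z hz w hw
  rw [mem_ball_zero_iff] at hz hw
  rcases eq_or_ne z w with rfl | hne
  · rw [sub_self, norm_zero]; positivity
  · refine (main_bound hα hα1 hM hc hH hz hw (norm_pos_iff.2 (sub_ne_zero.2 hne))).trans ?_
    exact mul_le_mul_of_nonneg_right (by linarith) (by positivity)

end
end

section
/- Let 0 < α ≤ 1, C > 0, and let f : 𝔻 → ℂ be continuously differentiable with |f_z(z)| + |f_z̄(z)| ≤ C / (1 − |z|²)^{1−α} for all z ∈ 𝔻. Then f is α-Hölder continuous on 𝔻, i.e., there exists L > 0 such that |f(z) − f(w)| ≤ L |z − w|^α for all z, w ∈ 𝔻. -/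
open MeasureTheory Complex Metric Set Filter
open scoped Real Topology ENNReal

noncomputable section

theorem aux_fd (f : ℂ → ℂ) (z v : ℂ) :
    ‖fderiv ℝ f z v‖ ≤ (‖wdz f z‖ + ‖wdzb f z‖) * ‖v‖ := by
  have h : fderiv ℝ f z v = wdz f z * v + wdzb f z * (starRingEnd ℂ) v := by
    have hv : v = v.re • (1:ℂ) + v.im • Complex.I := by
      simp [Complex.re_add_im]
    have h1 : fderiv ℝ f z v = v.re * fderiv ℝ f z 1 + v.im * fderiv ℝ f z Complex.I := by
      conv_lhs => rw [hv]
      rw [map_add, map_smul, map_smul]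
      simp
    have h2 : v = v.re + v.im * Complex.I := (Complex.re_add_im v).symm
    have h3 : (starRingEnd ℂ) v = v.re - v.im * Complex.I := by
      apply Complex.ext <;> simp
    rw [h1, h3]
    simp only [wdz, wdzb]
    linear_combination ((v.im : ℂ) * fderiv ℝ f z Complex.I) * Complex.I_sq
      - (1 / 2) * (fderiv ℝ f z 1 - Complex.I * fderiv ℝ f z Complex.I) * h2
  rw [h]
  refine (norm_add_le _ _).trans ?_
  simp [add_mul]

theorem aux_bd (α C : ℝ) (hα1 : α ≤ 1) (hC : 0 < C) (f : ℂ → ℂ)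
    (hb : ∀ z ∈ ball (0:ℂ) 1, ‖wdz f z‖ + ‖wdzb f z‖ ≤ C / (1 - ‖z‖ ^ 2) ^ (1 - α))
    (z : ℂ) (x : ℝ) (hx : 0 < x) (hz : ‖z‖ ≤ 1 - x) :
    ‖wdz f z‖ + ‖wdzb f z‖ ≤ C * x ^ (α - 1) := by
  have hn := norm_nonneg z
  refine (hb z (by simp; linarith)).trans ?_
  have h1 : x ≤ 1 - ‖z‖ ^ 2 := by nlinarith
  have h2 : x ^ (α - 1) = (x ^ (1 - α))⁻¹ := by
    rw [← Real.rpow_neg hx.le]; congr 1; ring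
  rw [h2, ← div_eq_mul_inv]
  have h3 : x ^ (1 - α) ≤ (1 - ‖z‖ ^ 2) ^ (1 - α) :=
    Real.rpow_le_rpow hx.le h1 (by linarith)
  have := Real.rpow_pos_of_pos hx (1 - α)
  gcongr

theorem aux_rad (α C : ℝ) (hα : 0 < α) (hα1 : α ≤ 1) (hC : 0 < C) (f : ℂ → ℂ)
    (hf : ContDiffOn ℝ 1 f (ball (0:ℂ) 1))
    (hb : ∀ z ∈ ball (0:ℂ) 1, ‖wdz f z‖ + ‖wdzb f z‖ ≤ C / (1 - ‖z‖ ^ 2) ^ (1 - α))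
    (z : ℂ) (hz : ‖z‖ < 1) (s : ℝ) (hs : 0 ≤ s) (hs1 : s ≤ 1) :
    ‖f ((1 - s : ℝ) • z) - f z‖ ≤ C / α * s ^ α := by
  have hn := norm_nonneg z
  have hnorm : ∀ t ∈ Icc 0 s, ‖(1 - t : ℝ) • z‖ = 1 - (1 - ‖z‖ + t * ‖z‖) := by
    intro t ht
    rw [norm_smul, Real.norm_eq_abs, abs_of_nonneg (by linarith [ht.2])]; ring
  have hpos : ∀ t ∈ Icc 0 s, 0 < 1 - ‖z‖ + t * ‖z‖ := by
    intro t ht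
    nlinarith [mul_nonneg ht.1 hn]
  have hg : ∀ t ∈ Icc 0 s, HasDerivAt (fun t : ℝ => f ((1 - t : ℝ) • z) - f z)
      (fderiv ℝ f ((1 - t : ℝ) • z) ((-1 : ℝ) • z)) t := by
    intro t ht
    have hm : (1 - t : ℝ) • z ∈ ball (0:ℂ) 1 := by
      rw [mem_ball_zero_iff, hnorm t ht]; linarith [hpos t ht]
    have hd : DifferentiableAt ℝ f ((1 - t : ℝ) • z) :=
      (hf.differentiableOn (by norm_num)).differentiableAt (isOpen_ball.mem_nhds hm)
    have h1 : HasDerivAt (fun t : ℝ => (1 - t : ℝ) • z) ((-1 : ℝ) • z) t :=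
      ((hasDerivAt_id t).const_sub 1).smul_const z
    exact (hd.hasFDerivAt.comp_hasDerivAt t h1).sub_const _
  have hB : ∀ t ∈ Icc 0 s, HasDerivAt
      (fun t : ℝ => C / α * ((1 - ‖z‖ + t * ‖z‖) ^ α - (1 - ‖z‖) ^ α))
      (C * (1 - ‖z‖ + t * ‖z‖) ^ (α - 1) * ‖z‖) t := by
    intro t ht
    have h1 : HasDerivAt (fun t : ℝ => 1 - ‖z‖ + t * ‖z‖) (1 * ‖z‖) t :=
      ((hasDerivAt_id t).mul_const ‖z‖).const_add _
    have h2 := ((h1.rpow_const (p := α) (Or.inl (hpos t ht).ne')).sub_const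
      ((1 - ‖z‖) ^ α)).const_mul (C / α)
    refine h2.congr_deriv ?_
    field_simp
  have key := image_norm_le_of_norm_deriv_right_le_deriv_boundary'
    (f := fun t : ℝ => f ((1 - t : ℝ) • z) - f z)
    (f' := fun t => fderiv ℝ f ((1 - t : ℝ) • z) ((-1 : ℝ) • z))
    (a := 0) (b := s)
    (B := fun t : ℝ => C / α * ((1 - ‖z‖ + t * ‖z‖) ^ α - (1 - ‖z‖) ^ α))
    (B' := fun t => C * (1 - ‖z‖ + t * ‖z‖) ^ (α - 1) * ‖z‖)
    (fun t ht => (hg t ht).continuousAt.continuousWithinAt)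
    (fun t ht => (hg t (Ico_subset_Icc_self ht)).hasDerivWithinAt)
    (by simp)
    (fun t ht => (hB t ht).continuousAt.continuousWithinAt)
    (fun t ht => (hB t (Ico_subset_Icc_self ht)).hasDerivWithinAt)
    (by
      intro t ht
      have ht := Ico_subset_Icc_self ht
      refine (aux_fd _ _ _).trans ?_
      have := aux_bd α C hα1 hC f hb ((1 - t : ℝ) • z) _ (hpos t ht) (hnorm t ht).le
      have e : ‖(-1 : ℝ) • z‖ = ‖z‖ := by simp
      rw [e]
      gcongr)
    (right_mem_Icc.2 hs)
  refine key.trans ?_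
  have h1 := Real.rpow_add_le_add_rpow (p := α) (a := 1 - ‖z‖) (b := s * ‖z‖) (by linarith)
    (by positivity) hα.le hα1
  have h2 : (s * ‖z‖) ^ α ≤ s ^ α :=
    Real.rpow_le_rpow (by positivity) (by nlinarith) hα.le
  have : 0 < C / α := by positivity
  refine mul_le_mul_of_nonneg_left ?_ this.le
  linarith

/-- (Gehring–Martio) Let `0 < α ≤ 1`, `C > 0` and let `f : 𝔻 → ℂ` be
`C¹` with `|f_z(z)| + |f_z̄(z)| ≤ C/(1-|z|²)^{1-α}` on `𝔻`. Then `f` is `α`-Hölder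
continuous on `𝔻`. -/
theorem stmt19 (α C : ℝ) (hα : 0 < α) (hα1 : α ≤ 1) (hC : 0 < C) (f : ℂ → ℂ)
    (hf : ContDiffOn ℝ 1 f (ball (0:ℂ) 1))
    (hb : ∀ z ∈ ball (0:ℂ) 1, ‖wdz f z‖ + ‖wdzb f z‖ ≤ C / (1 - ‖z‖ ^ 2) ^ (1 - α)) :
    ∃ L : ℝ, 0 < L ∧ ∀ z ∈ ball (0:ℂ) 1, ∀ w ∈ ball (0:ℂ) 1,
      ‖f z - f w‖ ≤ L * ‖z - w‖ ^ α := by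
  refine ⟨C / α + C + C / α, by positivity, fun z hz w hw => ?_⟩
  rw [mem_ball_zero_iff] at hz hw
  rcases eq_or_ne z w with rfl | hne
  · simp [Real.zero_rpow hα.ne']
  have hd : 0 < ‖z - w‖ := norm_pos_iff.2 (sub_ne_zero.2 hne)
  set d := ‖z - w‖ with hdd
  set s := min d 1 with hsd
  have hs : 0 < s := lt_min hd one_pos
  have hs1 : s ≤ 1 := min_le_right _ _
  have hsα : s ^ α ≤ d ^ α := Real.rpow_le_rpow hs.le (min_le_left _ _) hα.le
  have rz := aux_rad α C hα hα1 hC f hf hb z hz s hs.le hs1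
  have rw' := aux_rad α C hα hα1 hC f hf hb w hw s hs.le hs1
  have mem : ∀ u : ℂ, ‖u‖ < 1 → (1 - s : ℝ) • u ∈ closedBall (0:ℂ) (1 - s) := by
    intro u hu
    rw [mem_closedBall_zero_iff, norm_smul, Real.norm_eq_abs, abs_of_nonneg (by linarith)]
    nlinarith [norm_nonneg u]
  have mid : ‖f ((1 - s : ℝ) • z) - f ((1 - s : ℝ) • w)‖ ≤ C * s ^ α := by
    have h := (convex_closedBall (0:ℂ) (1 - s)).norm_image_sub_le_of_norm_fderiv_le
      (𝕜 := ℝ) (f := f) (C := C * s ^ (α - 1))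
      (fun x hx => (hf.differentiableOn (by norm_num)).differentiableAt
        (isOpen_ball.mem_nhds (by
          rw [mem_closedBall_zero_iff] at hx
          rw [mem_ball_zero_iff]; linarith)))
      (fun x hx => ContinuousLinearMap.opNorm_le_bound _ (by positivity) (fun v => by
        refine (aux_fd _ _ _).trans ?_
        rw [mem_closedBall_zero_iff] at hx
        have := aux_bd α C hα1 hC f hb x s hs hx
        gcongr)) (mem w hw) (mem z hz)
    refine h.trans ?_
    have e : ‖(1 - s : ℝ) • z - (1 - s : ℝ) • w‖ ≤ s := by
      rw [← smul_sub, norm_smul, Real.norm_eq_abs, abs_of_nonneg (by linarith), ← hdd]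
      rcases le_total d 1 with h1 | h1
      · have : s = d := min_eq_left h1
        rw [this]; nlinarith
      · have : s = 1 := min_eq_right h1
        rw [this]; simp
    calc _ ≤ C * s ^ (α - 1) * s := by gcongr
      _ = C * s ^ α := by
        rw [mul_assoc, Real.rpow_sub_one hs.ne']; field_simp
  rw [norm_sub_rev] at rz
  have tri : ‖f z - f w‖ ≤ ‖f z - f ((1 - s : ℝ) • z)‖ +
      ‖f ((1 - s : ℝ) • z) - f ((1 - s : ℝ) • w)‖ + ‖f ((1 - s : ℝ) • w) - f w‖ := by
    refine le_trans (le_of_eq ?_) (norm_add₃_le)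
    congr 1; ring
  calc ‖f z - f w‖ ≤ (C / α + C + C / α) * s ^ α := by linarith
    _ ≤ _ := by gcongr

end
end
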